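/- Let G be a connected weighted graph on a finite vertex set V with positive edge susceptances and weighted Laplacian L, and fix a reference vertex r, so shift factors Ψ_{ℓ,v} are well defined. Let C ⊆ V be a vertex cut set, let B be a nonempty union of the vertex sets of some (but not all) connected components of G − C, and A = V ∖ (B ∪ C), so that no edge of G joins A and B; let {n_1, …, n_M} be the vertices of C adjacent in G to at least one vertex of B. Suppose all congested lines are contained in the i-th sub-graph: the shadow prices μ_ℓ are real numbers that vanish on every edge ℓ having an endpoint in B, and the locational marginal price at bus v is λ_v = λ_r − Σ_ℓ μ_ℓ Ψ_{ℓ,v}, where λ_r is the LMP at the reference bus. Then for every p ∈ B, min{λ_{n_1}, …, λ_{n_M}} ≤ λ_p ≤ max{λ_{n_1}, …, λ_{n_M}}; consequently a pair of buses of B ∪ {n_1,…,n_M} with maximum LMP difference can be chosen among {n_1, …, n_M}, i.e., max over u, v ∈ B ∪ {n_1,…,n_M} of |λ_u − λ_v| equals max over u, v ∈ {n_1,…,n_M} of |λ_u − λ_v|. -/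

import Mathlib

open Matrix

/-- The weighted Laplacian of a graph on the finite vertex set `V` whose edges are
the pairs `{u,v}` with `w u v > 0`, carrying susceptance `w u v`. -/
def weightedLaplacian {V : Type*} [Fintype V] [DecidableEq V] (w : V → V → ℝ) :
    Matrix V V ℝ :=
  Matrix.of fun u v => if u = v then ∑ x, w u x else -(w u v)

/-!
Because the Laplacian `L` is symmetric, the nodal angles satisfy the reciprocity law
`Θ u v = Θ v u`.  Hence the shift factor of a line, as a function of the bus, is a dipole
potential: `L` sends it to a multiple of `e_{ℓ₂} - e_{ℓ₁}`.  The prices are a constant minus a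
combination of these dipole potentials over the congested lines, so they are harmonic at every bus
that meets no congested line, and the discrete maximum principle bounds them on `B` by their values
on the outer boundary of `B`.
-/

section OuterBoundary

variable {V R : Type*} [Fintype V] [DecidableEq V] [Zero R] [Preorder R] [DecidableLT R]

/-- The outer vertex boundary of `B` in the graph with edge weights `w`: the vertices outside `B`
that are joined to `B` by an edge of positive weight.  Weights need not be symmetric, and edges are
read as leaving `B`. -/
def outerBoundary (w : V → V → R) (B : Finset V) : Finset V :=
  {n ∈ Bᶜ | ∃ b ∈ B, 0 < w b n}

theorem mem_outerBoundary {w : V → V → R} {B : Finset V} {n : V} :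
    n ∈ outerBoundary w B ↔ n ∉ B ∧ ∃ b ∈ B, 0 < w b n := by
  simp only [outerBoundary, Finset.mem_filter, Finset.mem_compl]

theorem outerBoundary_eq_filter_of_separates {w : V → V → R} (hsym : ∀ u v, w u v = w v u)
    {B C : Finset V} (hCB : Disjoint C B) (hsep : ∀ a ∈ (C ∪ B)ᶜ, ∀ b ∈ B, w a b = 0) :
    outerBoundary w B = {n ∈ C | ∃ b ∈ B, 0 < w n b} := by
  ext n
  simp only [mem_outerBoundary, Finset.mem_filter, hsym n]
  refine and_congr_left fun ⟨b, hb, hpos⟩ => ⟨fun hnB => ?_, (Finset.disjoint_left.1 hCB ·)⟩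
  by_contra hnC
  exact hpos.ne' (hsym b n ▸ hsep n (by simp [hnC, hnB]) b hb)

end OuterBoundary

section MaximumPrinciple

variable {ι V R : Type*} [Ring R] [LinearOrder R] [IsStrictOrderedRing R]

theorem eq_of_sum_mul_sub_nonpos {s : Finset ι} {c f : ι → R} {a : R}
    (hc : ∀ x ∈ s, 0 ≤ c x) (hf : ∀ x ∈ s, 0 < c x → f x ≤ a)
    (hsum : ∑ x ∈ s, c x * (a - f x) ≤ 0) {x : ι} (hx : x ∈ s) (hcx : 0 < c x) : f x = a := by
  have hterm : ∀ y ∈ s, 0 ≤ c y * (a - f y) := by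
    intro y hy
    rcases (hc y hy).eq_or_lt with hzero | hpos
    · simp [← hzero]
    · exact mul_nonneg hpos.le (sub_nonneg.2 (hf y hy hpos))
  have hprod : c x * (a - f x) = 0 :=
    (Finset.sum_eq_zero_iff_of_nonneg hterm).1 (hsum.antisymm (Finset.sum_nonneg hterm)) x hx
  exact (sub_eq_zero.1 ((mul_eq_zero.1 hprod).resolve_left hcx.ne')).symm

variable [Fintype V] [DecidableEq V] {w : V → V → R}

theorem exists_mem_outerBoundary_ge_of_subharmonic (hw : ∀ u v, 0 ≤ w u v) {G : SimpleGraph V}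
    (hG : ∀ u v, G.Adj u v → 0 < w u v) (hconn : G.Preconnected)
    {B : Finset V} (hB : B ≠ Finset.univ) {f : V → R}
    (hf : ∀ b ∈ B, ∑ x, w b x * (f b - f x) ≤ 0) {p : V} (hp : p ∈ B) :
    ∃ n ∈ outerBoundary w B, f p ≤ f n := by
  obtain ⟨m, hm, hmax⟩ :=
    (B ∪ outerBoundary w B).exists_max_image f ⟨p, Finset.mem_union_left _ hp⟩
  have hpm : f p ≤ f m := hmax p (Finset.mem_union_left _ hp)
  rcases Finset.mem_union.1 hm with hmB | hmN
  · obtain ⟨a, ha⟩ : ∃ a, a ∉ B := by simpa [Finset.eq_univ_iff_forall] using hB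
    obtain ⟨walk⟩ := hconn m a
    -- A walk leaving the part of `B` where `f` is maximal keeps the value of `f`, so it leaves `B`.
    obtain ⟨⟨⟨b, n⟩, hadj⟩, -, ⟨hbB, hbm⟩, hn⟩ :=
      walk.exists_boundary_dart {x | x ∈ B ∧ f x = f m} ⟨hmB, rfl⟩ fun h => ha h.1
    have hmem : ∀ x, 0 < w b x → x ∈ B ∪ outerBoundary w B := fun x hx => by
      by_cases hxB : x ∈ B
      · exact Finset.mem_union_left _ hxB
      · exact Finset.mem_union_right _ (mem_outerBoundary.2 ⟨hxB, b, hbB, hx⟩)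
    have hnb : f n = f b :=
      eq_of_sum_mul_sub_nonpos (fun x _ => hw b x)
        (fun x _ hx => (hmax x (hmem x hx)).trans_eq hbm.symm) (hf b hbB)
        (Finset.mem_univ n) (hG b n hadj)
    have hnm : f n = f m := hnb.trans hbm
    have hnB : n ∉ B := fun h => hn ⟨h, hnm⟩
    exact ⟨n, mem_outerBoundary.2 ⟨hnB, b, hbB, hG b n hadj⟩, hpm.trans_eq hnm.symm⟩
  · exact ⟨m, hmN, hpm⟩

theorem exists_mem_outerBoundary_le_of_superharmonic (hw : ∀ u v, 0 ≤ w u v) {G : SimpleGraph V}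
    (hG : ∀ u v, G.Adj u v → 0 < w u v) (hconn : G.Preconnected)
    {B : Finset V} (hB : B ≠ Finset.univ) {f : V → R}
    (hf : ∀ b ∈ B, 0 ≤ ∑ x, w b x * (f b - f x)) {p : V} (hp : p ∈ B) :
    ∃ n ∈ outerBoundary w B, f n ≤ f p := by
  have hneg : ∀ b ∈ B, ∑ x, w b x * (-f b - -f x) ≤ 0 := fun b hb => by
    simpa only [neg_sub_neg, ← neg_sub (f b), mul_neg, Finset.sum_neg_distrib, neg_nonpos]
      using hf b hb
  obtain ⟨n, hn, hle⟩ := exists_mem_outerBoundary_ge_of_subharmonic hw hG hconn hB hneg hp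
  exact ⟨n, hn, neg_le_neg_iff.1 hle⟩

end MaximumPrinciple

theorem exists_forall_abs_sub_le_of_between {α M : Type*} [AddCommGroup M] [LinearOrder M]
    [IsOrderedAddMonoid M] {s : Set α} {t : Finset α} (ht : t.Nonempty) {f : α → M}
    (hlower : ∀ x ∈ s, ∃ n ∈ t, f n ≤ f x) (hupper : ∀ x ∈ s, ∃ n ∈ t, f x ≤ f n) :
    ∃ u ∈ t, ∃ v ∈ t, ∀ x ∈ s, ∀ y ∈ s, |f x - f y| ≤ |f u - f v| := by
  obtain ⟨u, hu, hmax⟩ := t.exists_max_image f ht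
  obtain ⟨v, hv, hmin⟩ := t.exists_min_image f ht
  have hle : ∀ x ∈ s, f x ≤ f u := fun x hx =>
    let ⟨n, hn, hxn⟩ := hupper x hx
    hxn.trans (hmax n hn)
  have hge : ∀ x ∈ s, f v ≤ f x := fun x hx =>
    let ⟨n, hn, hnx⟩ := hlower x hx
    (hmin n hn).trans hnx
  refine ⟨u, hu, v, hv, fun x hx y hy => le_trans ?_ (le_abs_self _)⟩
  exact abs_sub_le_of_le_of_le (hge x hx) (hle x hx) (hge y hy) (hle y hy)

theorem groundedPotential_comm {V R : Type*} [Fintype V] [DecidableEq V] [CommRing R]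
    {M : Matrix V V R} (hM : M.IsSymm) {r : V} {Θ : V → V → R} (hΘr : ∀ v, Θ v r = 0)
    (hΘ : ∀ v, M *ᵥ Θ v = Pi.single v 1 - Pi.single r 1) (u v : V) : Θ u v = Θ v u := by
  have hform : ∀ a b, Θ a ⬝ᵥ M *ᵥ Θ b = Θ a b := fun a b => by
    simp [hΘ, dotProduct_sub, hΘr]
  calc Θ u v = Θ u ⬝ᵥ M *ᵥ Θ v := (hform u v).symm
    _ = Θ v ⬝ᵥ M *ᵥ Θ u := by
      rw [dotProduct_mulVec, ← mulVec_transpose, hM.eq, dotProduct_comm]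
    _ = Θ v u := hform v u

section Prices

variable {V : Type*} [Fintype V] [DecidableEq V] {w : V → V → ℝ}

theorem weightedLaplacian_isSymm (hsym : ∀ u v, w u v = w v u) : (weightedLaplacian w).IsSymm := by
  ext u v
  rcases eq_or_ne u v with rfl | huv
  · rfl
  · simp [weightedLaplacian, huv, huv.symm, hsym v u]

theorem weightedLaplacian_mulVec_apply (hdiag : ∀ v, w v v = 0) (f : V → ℝ) (u : V) :
    (weightedLaplacian w *ᵥ f) u = ∑ x, w u x * (f u - f x) := by
  have hentry : ∀ x, weightedLaplacian w u x = (if u = x then ∑ y, w u y else 0) - w u x := by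
    intro x
    rcases eq_or_ne u x with rfl | hux
    · simp [weightedLaplacian, hdiag]
    · simp [weightedLaplacian, hux]
  simp only [mulVec, dotProduct, hentry, sub_mul, ite_mul, zero_mul, mul_sub,
    Finset.sum_sub_distrib, Finset.sum_ite_eq, Finset.mem_univ, if_true, Finset.sum_mul]

variable {r : V} {Θ : V → V → ℝ} {Ψ : V × V → V → ℝ}

theorem weightedLaplacian_mulVec_shiftFactor (hsym : ∀ u v, w u v = w v u)
    (hΘr : ∀ v, Θ v r = 0)
    (hΘ : ∀ v, weightedLaplacian w *ᵥ Θ v = Pi.single v 1 - Pi.single r 1)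
    (hΨ : ∀ ℓ v, Ψ ℓ v = w ℓ.1 ℓ.2 * (Θ v ℓ.2 - Θ v ℓ.1)) (ℓ : V × V) :
    weightedLaplacian w *ᵥ Ψ ℓ = w ℓ.1 ℓ.2 • (Pi.single ℓ.2 1 - Pi.single ℓ.1 1) := by
  have hrecip : Ψ ℓ = w ℓ.1 ℓ.2 • (Θ ℓ.2 - Θ ℓ.1) := by
    ext v
    simp only [hΨ, Pi.smul_apply, Pi.sub_apply, smul_eq_mul,
      groundedPotential_comm (weightedLaplacian_isSymm hsym) hΘr hΘ v]
  rw [hrecip, mulVec_smul, mulVec_sub, hΘ, hΘ, sub_sub_sub_cancel_right]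

variable {S : Finset (V × V)} {μ : V × V → ℝ} {lr : ℝ} {lmp : V → ℝ}

theorem weightedLaplacian_mulVec_lmp (hsym : ∀ u v, w u v = w v u) (hdiag : ∀ v, w v v = 0)
    (hΘr : ∀ v, Θ v r = 0)
    (hΘ : ∀ v, weightedLaplacian w *ᵥ Θ v = Pi.single v 1 - Pi.single r 1)
    (hΨ : ∀ ℓ v, Ψ ℓ v = w ℓ.1 ℓ.2 * (Θ v ℓ.2 - Θ v ℓ.1))
    (hlmp : ∀ v, lmp v = lr - ∑ ℓ ∈ S, μ ℓ * Ψ ℓ v) :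
    weightedLaplacian w *ᵥ lmp =
      ∑ ℓ ∈ S, (μ ℓ * w ℓ.1 ℓ.2) • (Pi.single ℓ.1 1 - Pi.single ℓ.2 1) := by
  have hconst : weightedLaplacian w *ᵥ (fun _ => lr) = 0 := by
    ext u
    simp [weightedLaplacian_mulVec_apply hdiag]
  have hlmp_eq : lmp = (fun _ => lr) - ∑ ℓ ∈ S, μ ℓ • Ψ ℓ := by
    ext v
    simp [hlmp]
  simp only [hlmp_eq, mulVec_sub, hconst, mulVec_sum, mulVec_smul,
    weightedLaplacian_mulVec_shiftFactor hsym hΘr hΘ hΨ, zero_sub, ← Finset.sum_neg_distrib,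
    smul_smul, ← smul_neg, neg_sub]

theorem lmp_harmonic_of_uncongested (hsym : ∀ u v, w u v = w v u) (hdiag : ∀ v, w v v = 0)
    (hΘr : ∀ v, Θ v r = 0)
    (hΘ : ∀ v, weightedLaplacian w *ᵥ Θ v = Pi.single v 1 - Pi.single r 1)
    (hΨ : ∀ ℓ v, Ψ ℓ v = w ℓ.1 ℓ.2 * (Θ v ℓ.2 - Θ v ℓ.1))
    (hlmp : ∀ v, lmp v = lr - ∑ ℓ ∈ S, μ ℓ * Ψ ℓ v)
    {b : V} (hμ : ∀ ℓ ∈ S, ℓ.1 = b ∨ ℓ.2 = b → μ ℓ = 0) :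
    ∑ x, w b x * (lmp b - lmp x) = 0 := by
  rw [← weightedLaplacian_mulVec_apply hdiag,
    weightedLaplacian_mulVec_lmp hsym hdiag hΘr hΘ hΨ hlmp, Finset.sum_apply]
  refine Finset.sum_eq_zero fun ℓ hℓ => ?_
  by_cases hmeets : ℓ.1 = b ∨ ℓ.2 = b
  · simp [hμ ℓ hℓ hmeets]
  · obtain ⟨h₁, h₂⟩ := not_or.1 hmeets
    simp [Ne.symm h₁, Ne.symm h₂]

theorem lmp_extremes_in_vertex_cut_set_general (hsym : ∀ u v, w u v = w v u)
    (hdiag : ∀ v, w v v = 0) (hnonneg : ∀ u v, 0 ≤ w u v)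
    (hconn : (SimpleGraph.fromRel fun u v => 0 < w u v).Preconnected)
    (hΘr : ∀ v, Θ v r = 0)
    (hΘ : ∀ v, weightedLaplacian w *ᵥ Θ v = Pi.single v 1 - Pi.single r 1)
    (hΨ : ∀ ℓ v, Ψ ℓ v = w ℓ.1 ℓ.2 * (Θ v ℓ.2 - Θ v ℓ.1))
    {B : Finset V} (hB : B.Nonempty) (hB_ne : B ≠ Finset.univ)
    (hμ : ∀ ℓ ∈ S, ℓ.1 ∈ B ∨ ℓ.2 ∈ B → μ ℓ = 0)
    (hlmp : ∀ v, lmp v = lr - ∑ ℓ ∈ S, μ ℓ * Ψ ℓ v) :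
    (∀ p ∈ B, (∃ n₁ ∈ outerBoundary w B, lmp n₁ ≤ lmp p) ∧
      (∃ n₂ ∈ outerBoundary w B, lmp p ≤ lmp n₂)) ∧
    (∃ u ∈ outerBoundary w B, ∃ v ∈ outerBoundary w B,
      ∀ x ∈ B ∪ outerBoundary w B, ∀ y ∈ B ∪ outerBoundary w B,
        |lmp x - lmp y| ≤ |lmp u - lmp v|) := by
  have hpos : ∀ u v, (SimpleGraph.fromRel fun u v => 0 < w u v).Adj u v → 0 < w u v :=
    fun u v huv => huv.2.elim id fun hvu => hsym v u ▸ hvu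
  have hharm : ∀ b ∈ B, ∑ x, w b x * (lmp b - lmp x) = 0 := by
    intro b hb
    refine lmp_harmonic_of_uncongested hsym hdiag hΘr hΘ hΨ hlmp fun ℓ hℓ hmeets => hμ ℓ hℓ ?_
    rcases hmeets with rfl | rfl
    exacts [Or.inl hb, Or.inr hb]
  have hlower : ∀ p ∈ B, ∃ n ∈ outerBoundary w B, lmp n ≤ lmp p := fun _ =>
    exists_mem_outerBoundary_le_of_superharmonic hnonneg hpos hconn hB_ne
      fun b hb => (hharm b hb).ge
  have hupper : ∀ p ∈ B, ∃ n ∈ outerBoundary w B, lmp p ≤ lmp n := fun _ =>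
    exists_mem_outerBoundary_ge_of_subharmonic hnonneg hpos hconn hB_ne
      fun b hb => (hharm b hb).le
  refine ⟨fun p hp => ⟨hlower p hp, hupper p hp⟩, ?_⟩
  obtain ⟨p, hp⟩ := hB
  obtain ⟨n, hn, -⟩ := hlower p hp
  exact exists_forall_abs_sub_le_of_between (s := ↑(B ∪ outerBoundary w B)) ⟨n, hn⟩
    (fun x hx => (Finset.mem_union.1 hx).elim (hlower x) fun hxN => ⟨x, hxN, le_rfl⟩)
    (fun x hx => (Finset.mem_union.1 hx).elim (hupper x) fun hxN => ⟨x, hxN, le_rfl⟩)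

end Prices

/-- Corollary 2.  Decompose the connected grid by a vertex cut set `C`: `B` is a
nonempty union of some (but not all) of the connected components of `G − C`,
`A = V ∖ (B ∪ C)` is nonempty, and no edge joins `A` and `B`; `N` is the set of cut
vertices adjacent to `B`.  If all congested lines lie outside `B` (the shadow
prices `μ` vanish on every line with an endpoint in `B`) and the LMPs are
`λ v = λr − ∑_ℓ μ ℓ * Ψ ℓ v`, then the LMP of every bus of `B` lies between the
minimum and the maximum of the LMPs of the buses of `N`; consequently a pair of
buses of `B ∪ N` with maximum LMP difference can be chosen inside `N`. -/
theorem lmp_extremes_in_vertex_cut_set {V : Type*} [Fintype V] [DecidableEq V]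
    (w : V → V → ℝ)
    (hsym : ∀ u v, w u v = w v u)
    (hdiag : ∀ v, w v v = 0)
    (hnonneg : ∀ u v, 0 ≤ w u v)
    (hconn : (SimpleGraph.fromRel fun u v => 0 < w u v).Connected)
    -- the reference bus and the nodal angles defining the shift factors
    (r : V) (Θ : V → V → ℝ)
    (hΘr : ∀ v, Θ v r = 0)
    (hΘ : ∀ v, weightedLaplacian w *ᵥ Θ v = Pi.single v 1 - Pi.single r 1)
    -- the injection shift factors of the oriented lines
    (Ψ : V × V → V → ℝ)
    (hΨ : ∀ ℓ v, Ψ ℓ v = w ℓ.1 ℓ.2 * (Θ v ℓ.2 - Θ v ℓ.1))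
    -- the vertex cut set `C` and the decomposition `V = A ∪ C ∪ B`
    (C B : Finset V) (hCB : Disjoint C B) (hB : B.Nonempty)
    (A : Finset V) (hA : A = (C ∪ B)ᶜ) (hAne : A.Nonempty)
    (hsep : ∀ a ∈ A, ∀ b ∈ B, w a b = 0)
    -- the cut vertices adjacent to `B`
    (N : Finset V) (hN : N = C.filter fun n => ∃ b ∈ B, 0 < w n b)
    -- shadow prices, vanishing on every line with an endpoint in `B`
    (μ : V × V → ℝ)
    (hμ : ∀ ℓ : V × V, ℓ.1 ∈ B ∨ ℓ.2 ∈ B → μ ℓ = 0)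
    -- the locational marginal prices
    (lr : ℝ) (lmp : V → ℝ)
    (hlmp : ∀ v, lmp v =
      lr - ∑ ℓ ∈ Finset.univ.filter (fun ℓ : V × V => 0 < w ℓ.1 ℓ.2), μ ℓ * Ψ ℓ v) :
    (∀ p ∈ B, (∃ n1 ∈ N, lmp n1 ≤ lmp p) ∧ (∃ n2 ∈ N, lmp p ≤ lmp n2)) ∧
    (∃ u ∈ N, ∃ v ∈ N, ∀ x ∈ B ∪ N, ∀ y ∈ B ∪ N, |lmp x - lmp y| ≤ |lmp u - lmp v|) := by
  subst hA hN
  rw [← outerBoundary_eq_filter_of_separates hsym hCB hsep]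
  exact lmp_extremes_in_vertex_cut_set_general hsym hdiag hnonneg hconn.preconnected hΘr hΘ hΨ hB
    (by rintro rfl; simp at hAne) (fun ℓ _ => hμ ℓ) hlmp
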